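/- arXiv:2105.06712 — 2 statements merged into one kernel-verified Lean document; each statement's English description precedes it below -/
import Mathlib

section
/- Let h and k be natural numbers with k ≥ 1, and let S be a finite set of binary strings (lists of Booleans), each of length exactly h, with |S| = k. Then the set of all prefixes (initial segments, of any length from 0 to h) of strings in S has cardinality at most 2·k + k·(h − ⌊log₂ k⌋). (The strings of S encode the k updated leaf positions in the complete binary recursion tree of the parallel divide-and-conquer sum on n = 2^h inputs; the prefix set is exactly the set of recursion-tree nodes containing an affected read, so a batch update of size k induces O(k·log(1 + n/k)) affected reads and computation distance.) -/
/-- The set of all prefixes (initial segments) of strings in a finite set `S`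
of binary strings (lists of Booleans). -/
def prefixSet (S : Finset (List Bool)) : Finset (List Bool) :=
  S.biUnion (fun l => l.inits.toFinset)

theorem prefixSet_card_le (h k : ℕ) (hk : 1 ≤ k) (S : Finset (List Bool))
    (hlen : ∀ l ∈ S, l.length = h) (hcard : S.card = k) :
    (prefixSet S).card ≤ 2 * k + k * (h - Nat.log 2 k) := by
  classical
  set m := Nat.log 2 k with hm
  have hsub : prefixSet S ⊆
      ((Finset.range (m + 1)).biUnion fun j =>
        (Finset.univ : Finset (List.Vector Bool j)).image (fun v => v.toList)) ∪
      ((Finset.Ioc m h).biUnion fun j => S.image (fun l => l.take j)) := by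
    intro p hp
    simp only [prefixSet, Finset.mem_biUnion, List.mem_toFinset, List.mem_inits] at hp
    obtain ⟨l, hl, hpl⟩ := hp
    rw [Finset.mem_union]
    by_cases hlt : p.length ≤ m
    · left
      rw [Finset.mem_biUnion]
      refine ⟨p.length, Finset.mem_range.2 (by omega), ?_⟩
      exact Finset.mem_image.2 ⟨⟨p, rfl⟩, Finset.mem_univ _, rfl⟩
    · right
      rw [Finset.mem_biUnion]
      have h1 := hpl.length_le
      rw [hlen l hl] at h1
      refine ⟨p.length, Finset.mem_Ioc.2 ⟨by omega, h1⟩, ?_⟩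
      exact Finset.mem_image.2 ⟨l, hl, (List.prefix_iff_eq_take.1 hpl).symm⟩
  have hA : ((Finset.range (m + 1)).biUnion fun j =>
        (Finset.univ : Finset (List.Vector Bool j)).image (fun v => v.toList)).card
        ≤ 2 * k := by
    have h1 : ((Finset.range (m + 1)).biUnion fun j =>
        (Finset.univ : Finset (List.Vector Bool j)).image (fun v => v.toList)).card
        ≤ ∑ j ∈ Finset.range (m + 1), 2 ^ j := by
      refine Finset.card_biUnion_le.trans (Finset.sum_le_sum fun j _ => ?_)
      refine Finset.card_image_le.trans ?_
      simp [card_vector]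
    have h2 : ∑ j ∈ Finset.range (m + 1), 2 ^ j < 2 ^ (m + 1) :=
      Nat.geomSum_lt (le_refl 2) (fun j hj => Finset.mem_range.1 hj)
    have h3 : 2 ^ m ≤ k := Nat.pow_log_le_self 2 (by omega)
    rw [pow_succ] at h2
    omega
  have hB : ((Finset.Ioc m h).biUnion fun j => S.image (fun l => l.take j)).card
      ≤ k * (h - m) := by
    refine (Finset.card_biUnion_le_card_mul _ _ k fun j _ => ?_).trans ?_
    · exact Finset.card_image_le.trans hcard.le
    · rw [Nat.card_Ioc, mul_comm]
  exact (Finset.card_le_card hsub).trans ((Finset.card_union_le _ _).trans (Nat.add_le_add hA hB))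
end

section
/- Let h and k be natural numbers with k ≥ 1 and k ≤ 2^h, and let S be a finite set of binary strings (lists of Booleans), each of length exactly h, with |S| = k. Then the cardinality of the set of all prefixes of strings in S is at most 4·k·log₂(1 + 2^h/k), where the cardinality, k, and 2^h are regarded as real numbers. (With n = 2^h, this is the bound: a batch update changing k of the n input modifiables of the parallel divide-and-conquer sum induces O(k·log(1 + n/k)) affected reads and computation distance.) -/
theorem level_card (S : Finset (List Bool)) (h i : ℕ) (hi : i ≤ h)
    (hlen : ∀ l ∈ S, l.length = h) : (S.image (List.take i)).card ≤ 2 ^ i := by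
  have hsub : S.image (List.take i) ⊆
      (Finset.univ : Finset (List.Vector Bool i)).image List.Vector.toList := by
    intro x hx
    obtain ⟨l, hl, rfl⟩ := Finset.mem_image.1 hx
    refine Finset.mem_image.2 ⟨⟨l.take i, ?_⟩, Finset.mem_univ _, rfl⟩
    rw [List.length_take, hlen l hl]
    omega
  refine (Finset.card_le_card hsub).trans (Finset.card_image_le.trans ?_)
  rw [Finset.card_univ, card_vector, Fintype.card_bool]

theorem prefix_card_nat (S : Finset (List Bool)) (h m : ℕ) (hm : m ≤ h)
    (hlen : ∀ l ∈ S, l.length = h) :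
    (prefixSet S).card ≤ 2 ^ (m + 1) + (h - m) * S.card := by
  have hsub : prefixSet S ⊆
      (Finset.range (h + 1)).biUnion (fun i => S.image (List.take i)) := by
    intro x hx
    simp only [prefixSet, Finset.mem_biUnion, List.mem_toFinset, List.mem_inits] at hx
    obtain ⟨l, hl, hxl⟩ := hx
    refine Finset.mem_biUnion.2 ⟨x.length, ?_, Finset.mem_image.2 ⟨l, hl, ?_⟩⟩
    · have := hxl.length_le
      rw [hlen l hl] at this
      exact Finset.mem_range.2 (by omega)
    · exact (List.prefix_iff_eq_take.1 hxl).symm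
  refine (Finset.card_le_card hsub).trans (Finset.card_biUnion_le.trans ?_)
  have e : h + 1 = (m + 1) + (h - m) := by omega
  rw [e, Finset.sum_range_add]
  refine Nat.add_le_add ?_ ?_
  · calc _ ≤ ∑ i ∈ Finset.range (m + 1), 2 ^ i := Finset.sum_le_sum (fun i hi =>
          level_card S h i (by have := Finset.mem_range.1 hi; omega) hlen)
      _ ≤ _ := by
          have := Nat.geomSum_eq (le_refl 2) (m + 1)
          rw [this]; simp
  · calc _ ≤ ∑ i ∈ Finset.range (h - m), S.card :=
          Finset.sum_le_sum (fun i _ => Finset.card_image_le)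
      _ = _ := by simp

theorem prefixSet_card_le_real (h k : ℕ) (hk : 1 ≤ k) (hk2 : k ≤ 2 ^ h)
    (S : Finset (List Bool)) (hlen : ∀ l ∈ S, l.length = h) (hcard : S.card = k) :
    ((prefixSet S).card : ℝ) ≤ 4 * (k : ℝ) * Real.logb 2 (1 + (2 : ℝ) ^ h / (k : ℝ)) := by
  have hm1 : 2 ^ Nat.log 2 k ≤ k := Nat.pow_log_le_self 2 (by omega)
  have hm2 : k < 2 ^ (Nat.log 2 k + 1) := Nat.lt_pow_succ_log_self (by norm_num) k
  generalize Nat.log 2 k = m at hm1 hm2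
  have hmh : m ≤ h := (Nat.pow_le_pow_iff_right (by norm_num : 1 < 2)).1 (hm1.trans hk2)
  have hc := prefix_card_nat S h m hmh hlen
  rw [hcard] at hc
  have hc' : ((prefixSet S).card : ℝ) ≤ k * (2 + ((h : ℝ) - m)) := by
    have h1 : (prefixSet S).card ≤ 2 * k + (h - m) * k := by
      rw [pow_succ] at hc; omega
    have h2 : ((prefixSet S).card : ℝ) ≤ ((2 * k + (h - m) * k : ℕ) : ℝ) := by exact_mod_cast h1
    push_cast [Nat.cast_sub hmh] at h2
    linarith
  have hkp : (0 : ℝ) < k := by exact_mod_cast hk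
  have hL1 : 1 ≤ Real.logb 2 (1 + (2 : ℝ) ^ h / (k : ℝ)) := by
    rw [Real.le_logb_iff_rpow_le (by norm_num) (by positivity), Real.rpow_one]
    have : 1 ≤ (2 : ℝ) ^ h / (k : ℝ) := by
      rw [le_div_iff₀ hkp, one_mul]; exact_mod_cast hk2
    linarith
  have hL2 : (h : ℝ) - (m + 1 : ℕ) ≤ Real.logb 2 (1 + (2 : ℝ) ^ h / (k : ℝ)) := by
    rw [Real.le_logb_iff_rpow_le (by norm_num) (by positivity), Real.rpow_sub (by norm_num),
      Real.rpow_natCast, Real.rpow_natCast]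
    have : (2 : ℝ) ^ h / 2 ^ (m + 1) ≤ 2 ^ h / k := by
      apply div_le_div_of_nonneg_left (by positivity) hkp
      exact_mod_cast hm2.le
    linarith
  push_cast at hL2
  calc _ ≤ _ := hc'
    _ ≤ k * (4 * Real.logb 2 (1 + (2 : ℝ) ^ h / (k : ℝ))) :=
        mul_le_mul_of_nonneg_left (by linarith) hkp.le
    _ = _ := by ring
end
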